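/- arXiv:2307.00650 — 4 statements merged into one kernel-verified Lean document; each statement's English description precedes it below -/
import Mathlib

section
/- For every β ∈ [0,1), the map x ↦ G(β,x) sends the interval [f²_m, f_m] into [f²_m, f_m]. -/
open Set

/-- Prediction-based control map `G β x = (1−β) f x + β x`. -/
noncomputable def G (f : ℝ → ℝ) (β x : ℝ) : ℝ := (1 - β) * f x + β * x

/-!
`G f β x` is a convex combination of `f x` and `x`, so it is enough that `f` itself maps
`[f²_m, f_m]` into itself. To the left of `K` the map `f` moves points up, but never above its
maximum `f_m`; to the right of `K` it moves points down, but never below `f²_m`. The infimum `f²_m`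
is taken over the open interval `(K, f_m)` only, and continuity extends the bound to the endpoints.
-/

theorem mapsTo_G_of_convex {f : ℝ → ℝ} {β : ℝ} {s : Set ℝ} (hs : Convex ℝ s)
    (hf : MapsTo f s s) (hβ : β ∈ Icc (0 : ℝ) 1) : MapsTo (G f β) s s := fun _ hx =>
  hs (hf hx) hx (sub_nonneg.2 hβ.2) hβ.1 (sub_add_cancel 1 β)

theorem mapsTo_Icc_of_le_map_of_map_le {α : Type*} [LinearOrder α] {f : α → α} {m K M : α}
    (le_map : ∀ x ∈ Ico m K, x ≤ f x) (map_le_M : ∀ x ∈ Icc m K, f x ≤ M)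
    (map_le : ∀ x ∈ Ioc K M, f x ≤ x) (m_le_map : ∀ x ∈ Icc K M, m ≤ f x) :
    MapsTo f (Icc m M) (Icc m M) := by
  rintro x ⟨hmx, hxM⟩
  constructor
  · rcases lt_or_ge x K with hxK | hKx
    · exact hmx.trans (le_map x ⟨hmx, hxK⟩)
    · exact m_le_map x ⟨hKx, hxM⟩
  · rcases le_or_gt x K with hxK | hKx
    · exact map_le_M x ⟨hmx, hxK⟩
    · exact (map_le x ⟨hKx, hxM⟩).trans hxM

theorem lowerBounds_image_Ioo_subset_lowerBounds_image_Icc {α β : Type*} [LinearOrder α]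
    [DenselyOrdered α] [TopologicalSpace α] [OrderTopology α] [Preorder β] [TopologicalSpace β]
    [ClosedIciTopology β] {f : α → β} {a b : α} (hab : a ≠ b) (hf : ContinuousOn f (Icc a b)) :
    lowerBounds (f '' Ioo a b) ⊆ lowerBounds (f '' Icc a b) := by
  intro c hc
  have hmaps : MapsTo f (Ioo a b) (Ici c) := fun x hx => hc (mem_image_of_mem f hx)
  rw [← closure_Ioo hab] at hf ⊢
  exact forall_mem_image.2 fun x hx =>
    isClosed_Ici.closure_subset (hmaps.closure_of_continuousOn hf hx)

theorem stmt3_general {f : ℝ → ℝ} {K m M β : ℝ} (hf_cont : ContinuousOn f (Icc K M))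
    (hf0 : 0 ≤ f 0) (hbelow : ∀ x ∈ Ioo 0 K, x ≤ f x) (habove : ∀ x ∈ Ioc K M, f x ≤ x)
    (hM : M ∈ upperBounds (f '' Icc 0 K)) (hKM : K < M)
    (hm : m ∈ lowerBounds (f '' Ioo K M)) (hm0 : 0 ≤ m) (hβ : β ∈ Icc (0 : ℝ) 1) :
    MapsTo (G f β) (Icc m M) (Icc m M) := by
  have le_map : ∀ x ∈ Ico 0 K, x ≤ f x := by
    rintro x ⟨hx0, hxK⟩
    rcases hx0.eq_or_lt with rfl | hx0
    · exact hf0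
    · exact hbelow x ⟨hx0, hxK⟩
  have m_le_map : ∀ x ∈ Icc K M, m ≤ f x := forall_mem_image.1 <|
    lowerBounds_image_Ioo_subset_lowerBounds_image_Icc hKM.ne hf_cont hm
  have hf_maps : MapsTo f (Icc m M) (Icc m M) := mapsTo_Icc_of_le_map_of_map_le
    (fun x hx => le_map x (Ico_subset_Ico_left hm0 hx))
    (fun x hx => hM (mem_image_of_mem f (Icc_subset_Icc_left hm0 hx))) habove m_le_map
  exact mapsTo_G_of_convex (convex_Icc m M) hf_maps hβ

/-- for every β ∈ [0,1), the map x ↦ G(β,x) sends [f²_m, f_m] into itself. -/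
theorem stmt3
    (f : ℝ → ℝ) (K : ℝ)
    (hf_cont : ContinuousOn f (Set.Ici 0))
    (hf_nonneg : ∀ x, 0 ≤ x → 0 ≤ f x)
    (hf0 : f 0 = 0)
    (hK : 0 < K)
    (hbelow : ∀ x ∈ Set.Ioo 0 K, x < f x)
    (habove : ∀ x ∈ Set.Ioi K, 0 < f x ∧ f x < x)
    (fm f2m : ℝ)
    (hfm : IsGreatest (f '' Set.Icc 0 K) fm)
    (hfmK : K < fm)
    (hf2m : IsGLB (f '' Set.Ioo K fm) f2m)
    (β : ℝ) (hβ : β ∈ Set.Ico (0:ℝ) 1) :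
    ∀ x ∈ Set.Icc f2m fm, G f β x ∈ Set.Icc f2m fm := by
  have hf2m_nonneg : 0 ≤ f2m := hf2m.2 (forall_mem_image.2 fun x hx => (habove x hx.1).1.le)
  exact stmt3_general (hf_cont.mono fun x hx => hK.le.trans hx.1) hf0.ge
    (fun x hx => (hbelow x hx).le) (fun x hx => (habove x hx.1).2.le)
    hfm.2 hfmK hf2m.1 hf2m_nonneg (Ico_subset_Icc_self hβ)
end

section
/- The set S := {β ∈ (0,1) : G(β,G(β,x)) > x for all x ∈ (f²_m, K) and G(β,G(β,x)) < x for all x ∈ (K, f_m)} is nonempty (in particular every β ∈ (L⁻/(L⁻+1), 1) belongs to S), so that β̲_* := inf S satisfies β̲_* < 1; moreover, for every α ∈ (β̲_*, 1) and every x₀ > 0, the sequence defined by x_{n+1} = (1−α)f(x_n) + α x_n converges to K. -/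
open Set Filter

/-!
Prediction-based control preserves the class of population maps with equilibrium `K`, and for such
a map the equilibrium attracts every positive orbit as soon as `g (g x) < x` for all `x > K`: the
cluster points of an orbit form a compact set that `g` maps onto itself, and a least element below
`K` would force a greatest element exceeding itself. When `L (1 - β) < β`, the one-sided Lipschitz
bounds prevent `G f β` from overshooting `K`, so both steps of its second iterate move towards `K`.
Finally, increasing the control pulls both steps of the second iterate towards the diagonal, so the
condition `g (g x) < x` passes from one control to every larger one.
-/

lemma exists_mapClusterPt_map_eq {X : Type*} [TopologicalSpace X] [T2Space X] {s : Set X}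
    {g : X → X} {x : ℕ → X} {z : X} (hs : IsCompact s) (hg : ContinuousOn g s)
    (hxs : ∀ n, x n ∈ s) (hx : ∀ n, x (n + 1) = g (x n)) (hz : MapClusterPt z atTop x) :
    ∃ t, MapClusterPt t atTop x ∧ g t = z := by
  obtain ⟨U, hU, hUz⟩ := mapClusterPt_iff_ultrafilter.1 hz
  -- The preimage `t` is the limit along `U` of the shifted sequence `n ↦ x (n - 1)`.
  have hshift : ∀ᶠ n in (U : Filter ℕ), x (n - 1) ∈ s := Eventually.of_forall fun n ↦ hxs (n - 1)
  obtain ⟨t, hts, hUt⟩ := hs.ultrafilter_le_nhds' (U.map fun n ↦ x (n - 1)) hshift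
  replace hUt : Tendsto (fun n ↦ x (n - 1)) U (nhds t) := hUt
  refine ⟨t, mapClusterPt_iff_ultrafilter.2
    ⟨U.map (· - 1), (tendsto_sub_atTop_nat 1).mono_left hU, hUt⟩, ?_⟩
  have hgt : Tendsto (fun n ↦ g (x (n - 1))) U (nhds (g t)) :=
    (hg t hts).tendsto.comp (tendsto_nhdsWithin_iff.2 ⟨hUt, hshift⟩)
  refine tendsto_nhds_unique (hgt.congr' ?_) hUz
  filter_upwards [hU (eventually_ge_atTop 1)] with n hn
  rw [← hx, Nat.sub_add_cancel hn]

/-- A population map with positive equilibrium `K`: continuous on `[0, ∞)`, increasing populations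
below `K`, and decreasing populations above `K` without extinguishing them. The value at `0` is left
free, and `g K = K` follows by continuity. -/
structure IsPopulationMap (g : ℝ → ℝ) (K : ℝ) : Prop where
  equilibrium_pos : 0 < K
  continuousOn : ContinuousOn g (Ici 0)
  lt_map : ∀ x ∈ Ioo 0 K, x < g x
  map_mem_Ioo : ∀ x ∈ Ioi K, g x ∈ Ioo 0 x

namespace IsPopulationMap

variable {g : ℝ → ℝ} {K x y : ℝ}

lemma map_equilibrium (hg : IsPopulationMap g K) : g K = K := by
  have hcont : ContinuousAt g K := hg.continuousOn.continuousAt (Ici_mem_nhds hg.equilibrium_pos)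
  apply le_antisymm
  · exact hcont.continuousWithinAt.closure_le (s := Ioi K) (by simp) continuousWithinAt_id
      fun x hx ↦ (hg.map_mem_Ioo x hx).2.le
  · exact continuousWithinAt_id.closure_le (s := Ioo 0 K)
      (by simp [closure_Ioo hg.equilibrium_pos.ne, hg.equilibrium_pos.le])
      hcont.continuousWithinAt fun x hx ↦ (hg.lt_map x hx).le

lemma le_map (hg : IsPopulationMap g K) (hx : x ∈ Ioc 0 K) : x ≤ g x := by
  rcases hx.2.eq_or_lt with rfl | hxK
  · exact hg.map_equilibrium.ge
  · exact (hg.lt_map x ⟨hx.1, hxK⟩).le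

lemma map_le (hg : IsPopulationMap g K) (hx : K ≤ x) : g x ≤ x := by
  rcases hx.eq_or_lt with rfl | hKx
  · exact hg.map_equilibrium.le
  · exact (hg.map_mem_Ioo x hKx).2.le

lemma map_lt_self_iff (hg : IsPopulationMap g K) (hx : 0 < x) : g x < x ↔ K < x :=
  ⟨fun h ↦ not_le.1 fun hxK ↦ h.not_ge (hg.le_map ⟨hx, hxK⟩), fun h ↦ (hg.map_mem_Ioo x h).2⟩

lemma lt_map_self_iff (hg : IsPopulationMap g K) (hx : 0 < x) : x < g x ↔ x < K :=
  ⟨fun h ↦ not_le.1 fun hKx ↦ h.not_ge (hg.map_le hKx), fun h ↦ hg.lt_map x ⟨hx, h⟩⟩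

lemma map_pos (hg : IsPopulationMap g K) (hx : 0 < x) : 0 < g x := by
  rcases le_or_gt x K with hxK | hKx
  · exact hx.trans_le (hg.le_map ⟨hx, hxK⟩)
  · exact (hg.map_mem_Ioo x hKx).1

lemma lt_map_map (hg : IsPopulationMap g K) (hx : x ∈ Ioo 0 K) (hgx : g x < K) :
    x < g (g x) :=
  have hxg : x < g x := hg.lt_map x hx
  hxg.trans (hg.lt_map (g x) ⟨hx.1.trans hxg, hgx⟩)

lemma map_map_lt (hg : IsPopulationMap g K) (hx : K < x) (hgx : K ≤ g x) : g (g x) < x :=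
  (hg.map_le hgx).trans_lt (hg.map_mem_Ioo x hx).2

lemma map_lt_of_map_le (hg : IsPopulationMap g K) (hx : K < x)
    (hgg : ∀ z ∈ Ioc K x, g (g z) < z) (hy : y < K) (hxy : g x ≤ y) : g y < x := by
  obtain ⟨z, hz, rfl⟩ := intermediate_value_Ioc' hx.le
    (hg.continuousOn.mono fun z hz ↦ hg.equilibrium_pos.le.trans hz.1)
    (show y ∈ Ico (g x) (g K) from ⟨hxy, by rwa [hg.map_equilibrium]⟩)
  exact (hgg z hz).trans_le hz.2

lemma exists_mapsTo_Icc (hg : IsPopulationMap g K) (hx : 0 < x) :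
    ∃ a b, 0 < a ∧ x ∈ Icc a b ∧ MapsTo g (Icc a b) (Icc a b) := by
  obtain ⟨M, hM⟩ := isCompact_Icc.bddAbove_image
    (hg.continuousOn.mono (Icc_subset_Ici_self : Icc 0 K ⊆ Ici 0))
  obtain ⟨b, hMb, hxb, hKb⟩ : ∃ b, M ≤ b ∧ x ≤ b ∧ K ≤ b :=
    ⟨max M (max x K), by simp, by simp, by simp⟩
  obtain ⟨w, hw, hwmin⟩ := isCompact_Icc.exists_isMinOn (nonempty_Icc.2 hKb)
    (hg.continuousOn.mono fun y hy ↦ hg.equilibrium_pos.le.trans hy.1)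
  have ha : 0 < min x (g w) := lt_min hx (hg.map_pos (hg.equilibrium_pos.trans_le hw.1))
  refine ⟨min x (g w), b, ha, ⟨min_le_left _ _, hxb⟩, fun y hy ↦ ?_⟩
  have hy0 : 0 < y := ha.trans_le hy.1
  rcases le_total y K with hyK | hKy
  · have hgyM : g y ≤ M := hM (mem_image_of_mem g ⟨hy0.le, hyK⟩)
    exact ⟨hy.1.trans (hg.le_map ⟨hy0, hyK⟩), hgyM.trans hMb⟩
  · exact ⟨(min_le_right _ _).trans (hwmin ⟨hKy, hy.2⟩), (hg.map_le hKy).trans hy.2⟩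

lemma subset_singleton_of_subset_image (hg : IsPopulationMap g K)
    (hgg : ∀ x ∈ Ioi K, g (g x) < x) {s : Set ℝ} (hs : IsCompact s) (hs0 : s ⊆ Ioi 0)
    (hsg : s ⊆ g '' s) : s ⊆ {K} := by
  rcases s.eq_empty_or_nonempty with rfl | hne
  · exact empty_subset _
  obtain ⟨a, has, ha⟩ := hs.exists_isLeast hne
  obtain ⟨b, hbs, hb⟩ := hs.exists_isGreatest hne
  obtain ⟨t, hts, hta⟩ := hsg has
  obtain ⟨u, hus, hub⟩ := hsg hbs
  have hKa : K ≤ a := by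
    by_contra! haK
    have hat : a < g a := hg.lt_map a ⟨hs0 has, haK⟩
    have hKt : K < t := (hg.map_lt_self_iff (hs0 hts)).1 <|
      hta ▸ (ha hts).lt_of_ne (by rintro rfl; exact hat.ne' hta)
    have hbb : g b < b := (hg.map_mem_Ioo b (hKt.trans_le (hb hts))).2
    have huK : u < K := (hg.lt_map_self_iff (hs0 hus)).1 <|
      hub ▸ (hb hus).lt_of_ne (by rintro rfl; exact hbb.ne hub)
    have hbt : g u < t := hg.map_lt_of_map_le hKt (fun z hz ↦ hgg z hz.1) huK (hta ▸ ha hus)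
    exact (hub ▸ hbt).not_ge (hb hts)
  have hbK : b ≤ K := by
    by_contra! hKb
    have hbu : b ≤ u := hub ▸ hg.map_le (hKa.trans (ha hus))
    obtain rfl : u = b := (hb hus).antisymm hbu
    exact (hg.map_mem_Ioo u hKb).2.ne hub
  exact fun y hy ↦ ((hb hy).trans hbK).antisymm (hKa.trans (ha hy))

theorem tendsto_of_map_map_lt (hg : IsPopulationMap g K) (hgg : ∀ x ∈ Ioi K, g (g x) < x)
    {x : ℕ → ℝ} (hx0 : 0 < x 0) (hx : ∀ n, x (n + 1) = g (x n)) :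
    Tendsto x atTop (nhds K) := by
  obtain ⟨a, b, ha, hx0ab, hmaps⟩ := hg.exists_mapsTo_Icc hx0
  have hmem (n : ℕ) : x n ∈ Icc a b := by
    induction n with
    | zero => exact hx0ab
    | succ n ih => exact hx n ▸ hmaps ih
  have hcluster : {z | MapClusterPt z atTop x} ⊆ Icc a b := fun z hz ↦
    isClosed_Icc.closure_subset <|
      ClusterPt.mem_closure_of_mem hz _ (mem_map.2 (Eventually.of_forall hmem))
  have hpreimage : {z | MapClusterPt z atTop x} ⊆ g '' {z | MapClusterPt z atTop x} := fun z hz ↦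
    exists_mapClusterPt_map_eq isCompact_Icc
      (hg.continuousOn.mono fun y hy ↦ ha.le.trans hy.1) hmem hx hz
  refine isCompact_Icc.tendsto_nhds_of_unique_mapClusterPt (Eventually.of_forall hmem)
    fun y _ hy ↦ hg.subset_singleton_of_subset_image hgg
      (isCompact_Icc.of_isClosed_subset isClosed_setOfPred_clusterPt hcluster)
      (fun z hz ↦ ha.trans_le (hcluster hz).1) hpreimage hy

end IsPopulationMap

section PredictionControl

variable {f : ℝ → ℝ} {K L M m α β x : ℝ}

lemma G_sub (f : ℝ → ℝ) (β x c : ℝ) : G f β x - c = (1 - β) * (f x - c) + β * (x - c) := by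
  unfold G
  ring

lemma G_sub_self (f : ℝ → ℝ) (β x : ℝ) : G f β x - x = (1 - β) * (f x - x) := by
  rw [G_sub, sub_self x, mul_zero, add_zero]

lemma G_le_G_of_map_le (hαβ : β ≤ α) (hx : f x ≤ x) : G f β x ≤ G f α x := by
  unfold G
  nlinarith

lemma G_le_G_of_le_map (hαβ : β ≤ α) (hx : x ≤ f x) : G f α x ≤ G f β x := by
  unfold G
  nlinarith

lemma G_lt_map (hα : 0 < α) (hx : x < f x) : G f α x < f x := by
  unfold G
  nlinarith

lemma isPopulationMap_G (hf : IsPopulationMap f K) (hβ : β ∈ Ico 0 1) :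
    IsPopulationMap (G f β) K where
  equilibrium_pos := hf.equilibrium_pos
  continuousOn := (hf.continuousOn.const_mul _).add (continuousOn_id.const_mul _)
  lt_map x hx := sub_pos.1 <| G_sub_self f β x ▸
    mul_pos (sub_pos.2 hβ.2) (sub_pos.2 (hf.lt_map x hx))
  map_mem_Ioo x hx :=
    have hfx : f x ∈ Ioo 0 x := hf.map_mem_Ioo x hx
    ⟨add_pos_of_pos_of_nonneg (mul_pos (sub_pos.2 hβ.2) hfx.1)
        (mul_nonneg hβ.1 (hfx.1.trans hfx.2).le),
      sub_neg.1 <| G_sub_self f β x ▸ mul_neg_of_pos_of_neg (sub_pos.2 hβ.2) (sub_neg.2 hfx.2)⟩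

lemma G_lt_of_sub_le (hβ : β < 1) (hLβ : L * (1 - β) < β) (hx : x < K)
    (hL : f x - K ≤ L * (K - x)) : G f β x < K := by
  rw [← sub_neg]
  calc G f β x - K = (1 - β) * (f x - K) + β * (x - K) := G_sub f β x K
    _ ≤ (1 - β) * (L * (K - x)) + β * (x - K) := by gcongr
    _ = (L * (1 - β) - β) * (K - x) := by ring
    _ < 0 := mul_neg_of_neg_of_pos (sub_neg.2 hLβ) (sub_pos.2 hx)

lemma lt_G_of_sub_le (hβ : β < 1) (hLβ : L * (1 - β) < β) (hx : K < x)
    (hL : K - f x ≤ L * (x - K)) : K < G f β x := by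
  rw [← sub_pos]
  calc 0 < (β - L * (1 - β)) * (x - K) := mul_pos (sub_pos.2 hLβ) (sub_pos.2 hx)
    _ = (1 - β) * -(L * (x - K)) + β * (x - K) := by ring
    _ ≤ (1 - β) * (f x - K) + β * (x - K) := by gcongr; linarith
    _ = G f β x - K := (G_sub f β x K).symm

lemma G_G_lt_of_le (hf : IsPopulationMap f K) (hM : ∀ y ∈ Ioo 0 K, f y ≤ M) (hβ : 0 < β)
    (hGG : ∀ z ∈ Ioo K M, G f β (G f β z) < z) (hβα : β ≤ α) (hα : α < 1) (hx : K < x) :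
    G f α (G f α x) < x := by
  have hGα : IsPopulationMap (G f α) K := isPopulationMap_G hf ⟨hβ.le.trans hβα, hα⟩
  have hGβ : IsPopulationMap (G f β) K := isPopulationMap_G hf ⟨hβ.le, hβα.trans_lt hα⟩
  by_contra! hcon
  have hyK : G f α x < K := not_le.1 fun hKy ↦ hcon.not_gt (hGα.map_map_lt hx hKy)
  have hy : G f α x ∈ Ioo 0 K := ⟨hGα.map_pos (hf.equilibrium_pos.trans hx), hyK⟩
  have hxM : x < M := hcon.trans_lt <|
    (G_lt_map (hβ.trans_le hβα) (hf.lt_map _ hy)).trans_le (hM _ hy)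
  have hyβ : G f β (G f α x) < x :=
    hGβ.map_lt_of_map_le hx (fun z hz ↦ hGG z ⟨hz.1, hz.2.trans_lt hxM⟩) hyK
      (G_le_G_of_map_le hβα (hf.map_le hx.le))
  exact (hcon.trans (G_le_G_of_le_map hβα (hf.lt_map _ hy).le)).not_gt hyβ

/-- The controls `β ∈ (0, 1)` for which the second iterate of `G f β` moves every point of
`(m, K)` up and every point of `(K, M)` down. The paper's set is the case `m = f²_m`, `M = f_m`. -/
def stabilizingControls (f : ℝ → ℝ) (K m M : ℝ) : Set ℝ :=
  {β | β ∈ Ioo 0 1 ∧ (∀ x ∈ Ioo m K, x < G f β (G f β x)) ∧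
    (∀ x ∈ Ioo K M, G f β (G f β x) < x)}

lemma Ioo_subset_stabilizingControls (hf : IsPopulationMap f K) (hm : 0 ≤ m) (hL : 0 ≤ L)
    (hleft : ∀ x ∈ Ioo m K, f x - K ≤ L * (K - x))
    (hright : ∀ x ∈ Ioo K M, K - f x ≤ L * (x - K)) :
    Ioo (L / (L + 1)) 1 ⊆ stabilizingControls f K m M := by
  intro β hβ
  have hβ0 : 0 < β := (div_nonneg hL (by linarith)).trans_lt hβ.1
  have hLβ : L * (1 - β) < β := by
    have := (div_lt_iff₀ (by linarith)).1 hβ.1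
    linarith
  have hG : IsPopulationMap (G f β) K := isPopulationMap_G hf ⟨hβ0.le, hβ.2⟩
  exact ⟨⟨hβ0, hβ.2⟩,
    fun x hx ↦ hG.lt_map_map ⟨hm.trans_lt hx.1, hx.2⟩ (G_lt_of_sub_le hβ.2 hLβ hx.2 (hleft x hx)),
    fun x hx ↦ hG.map_map_lt hx.1 (lt_G_of_sub_le hβ.2 hLβ hx.1 (hright x hx)).le⟩

lemma csInf_stabilizingControls_lt_one (h : (stabilizingControls f K m M).Nonempty) :
    sInf (stabilizingControls f K m M) < 1 :=
  have ⟨_, hβ⟩ := h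
  csInf_lt_of_lt ⟨0, fun _ hα ↦ hα.1.1.le⟩ hβ hβ.1.2

theorem tendsto_of_csInf_stabilizingControls_lt (hf : IsPopulationMap f K)
    (hM : ∀ y ∈ Ioo 0 K, f y ≤ M) (hne : (stabilizingControls f K m M).Nonempty)
    (hα : α ∈ Ioo (sInf (stabilizingControls f K m M)) 1) {x : ℕ → ℝ} (hx0 : 0 < x 0)
    (hx : ∀ n, x (n + 1) = G f α (x n)) : Tendsto x atTop (nhds K) := by
  obtain ⟨β, ⟨hβ, -, hGG⟩, hβα⟩ := exists_lt_of_csInf_lt hne hα.1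
  exact (isPopulationMap_G hf ⟨(hβ.1.trans hβα).le, hα.2⟩).tendsto_of_map_map_lt
    (fun _ hy ↦ G_G_lt_of_le hf hM hβ.1 hGG hβα.le hα.2 hy) hx0 hx

end PredictionControl

lemma sub_le_mul_sub_of_forall_mem_Ioo {f : ℝ → ℝ} {p K L : ℝ}
    (hf : ContinuousWithinAt f (Ioo p K) p) (hpK : p < K)
    (hL : ∀ x ∈ Ioo p K, f x - K ≤ L * (K - x)) : f p - K ≤ L * (K - p) :=
  ContinuousWithinAt.closure_le (by simp [closure_Ioo hpK.ne, hpK.le])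
    (hf.sub continuousWithinAt_const) (by fun_prop) hL

theorem stmt7_general {f : ℝ → ℝ} {K p m L : ℝ} (hf : IsPopulationMap f K) (hp : p ∈ Icc 0 K)
    (hmax : IsMaxOn f (Icc 0 K) p) (hKp : K < f p) (hm : IsGLB (f '' Ioo K (f p)) m)
    (hleft : ∀ x ∈ Ioo p K, f x - K ≤ L * (K - x))
    (hright : ∀ x ∈ Ioo K (f p), K - f x ≤ L * (x - K)) :
    Ioo (L / (L + 1)) 1 ⊆ stabilizingControls f K m (f p) ∧
      (stabilizingControls f K m (f p)).Nonempty ∧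
      sInf (stabilizingControls f K m (f p)) < 1 ∧
      ∀ α ∈ Ioo (sInf (stabilizingControls f K m (f p))) 1, ∀ x : ℕ → ℝ, 0 < x 0 →
        (∀ n, x (n + 1) = G f α (x n)) → Tendsto x atTop (nhds K) := by
  have hpK : p < K := hp.2.lt_of_ne (by rintro rfl; exact hKp.ne' hf.map_equilibrium)
  have hpeak : f p - K ≤ L * (K - p) := sub_le_mul_sub_of_forall_mem_Ioo
    ((hf.continuousOn p hp.1).mono fun x hx ↦ hp.1.trans hx.1.le) hpK hleft
  have hL : 0 < L := pos_of_mul_pos_left ((sub_pos.2 hKp).trans_le hpeak) (sub_pos.2 hpK).le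
  have hm0 : 0 ≤ m := hm.2 <| forall_mem_image.2 fun x hx ↦ (hf.map_mem_Ioo x hx.1).1.le
  have hM (x : ℝ) (hx : x ∈ Ioo 0 K) : f x ≤ f p := hmax (Ioo_subset_Icc_self hx)
  have hleft' (x : ℝ) (hx : x ∈ Ioo m K) : f x - K ≤ L * (K - x) := by
    rcases le_or_gt x p with hxp | hpx
    · calc f x - K ≤ f p - K := sub_le_sub_right (hM x ⟨hm0.trans_lt hx.1, hx.2⟩) K
        _ ≤ L * (K - p) := hpeak
        _ ≤ L * (K - x) := by gcongr
    · exact hleft x ⟨hpx, hx.2⟩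
  have hsub := Ioo_subset_stabilizingControls hf hm0 hL.le hleft' hright
  have hne := (nonempty_Ioo.2 ((div_lt_one (by linarith)).2 (lt_add_one L))).mono hsub
  exact ⟨hsub, hne, csInf_stabilizingControls_lt_one hne,
    fun α hα x ↦ tendsto_of_csInf_stabilizingControls_lt hf hM hne hα⟩

/-- the set S of control values β for which G(β,·)² has no fixed point other
than K in (f²_m,f_m) is nonempty (it contains (L⁻/(L⁻+1),1)), β̲_* = inf S < 1, and every
constant control α ∈ (β̲_*,1) stabilizes the equilibrium K globally. -/
theorem stmt7
    (f : ℝ → ℝ) (K : ℝ)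
    (hf_cont : ContinuousOn f (Set.Ici 0))
    (hf_nonneg : ∀ x, 0 ≤ x → 0 ≤ f x)
    (hf0 : f 0 = 0)
    (hK : 0 < K)
    (hbelow : ∀ x ∈ Set.Ioo 0 K, x < f x)
    (habove : ∀ x ∈ Set.Ioi K, 0 < f x ∧ f x < x)
    (fm f2m : ℝ)
    (hfm : IsGreatest (f '' Set.Icc 0 K) fm)
    (hfmK : K < fm)
    (hf2m : IsGLB (f '' Set.Ioo K fm) f2m)
    (xmax : ℝ) (hxmax_mem : xmax ∈ Set.Icc 0 K) (hxmax_val : f xmax = fm)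
    (hxmax_largest : ∀ y ∈ Set.Icc 0 K, f y = fm → y ≤ xmax)
    (Lm Lp : ℝ) (hLp : 1 < Lp) (hLmLp : Lp ≤ Lm)
    (hLipL : ∀ x ∈ Set.Ioo xmax K, f x - K ≤ Lm * (K - x))
    (hLipR : ∀ x ∈ Set.Ioo K fm, K - f x ≤ Lp * (x - K)) :
    (∀ β ∈ Set.Ioo (Lm / (Lm + 1)) 1,
        β ∈ {β : ℝ | β ∈ Set.Ioo (0:ℝ) 1 ∧
          (∀ x ∈ Set.Ioo f2m K, x < G f β (G f β x)) ∧
          (∀ x ∈ Set.Ioo K fm, G f β (G f β x) < x)}) ∧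
    ({β : ℝ | β ∈ Set.Ioo (0:ℝ) 1 ∧
          (∀ x ∈ Set.Ioo f2m K, x < G f β (G f β x)) ∧
          (∀ x ∈ Set.Ioo K fm, G f β (G f β x) < x)}).Nonempty ∧
    sInf {β : ℝ | β ∈ Set.Ioo (0:ℝ) 1 ∧
          (∀ x ∈ Set.Ioo f2m K, x < G f β (G f β x)) ∧
          (∀ x ∈ Set.Ioo K fm, G f β (G f β x) < x)} < 1 ∧
    (∀ α ∈ Set.Ioo (sInf {β : ℝ | β ∈ Set.Ioo (0:ℝ) 1 ∧
          (∀ x ∈ Set.Ioo f2m K, x < G f β (G f β x)) ∧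
          (∀ x ∈ Set.Ioo K fm, G f β (G f β x) < x)}) 1,
      ∀ x : ℕ → ℝ, 0 < x 0 → (∀ n, x (n + 1) = (1 - α) * f (x n) + α * x n) →
        Tendsto x atTop (nhds K)) := by
  subst hxmax_val
  exact stmt7_general ⟨hK, hf_cont, hbelow, habove⟩ hxmax_mem
    (fun x hx ↦ hfm.2 (mem_image_of_mem f hx)) hfmK hf2m hLipL
    fun x hx ↦ (hLipR x hx).trans (mul_le_mul_of_nonneg_right hLmLp (sub_pos.2 hx.1).le)
end

section
/- Let θ ∈ (0,K) and let L̃⁻ ≥ L̃⁺ > 1 satisfy f(x)−K ≤ L̃⁻(K−x) for all x ∈ [K−θ, K] and K−f(x) ≤ L̃⁺(x−K) for all x ∈ [K, K+θ]. Let α satisfy Ψ(L̃⁺, L̃⁻) < α ≤ (L̃⁻−1)/(L̃⁻+1) (so that 𝓛̃⁻(α) := (1−α)L̃⁻ − α ≥ 1). Then for every x₀ ∈ (K − θ/𝓛̃⁻(α), K+θ), the sequence defined by x_{n+1} = (1−α)f(x_n) + α x_n converges to K. -/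
/-!
The controlled map overshoots `K` by at most the factor `A = (1 - α) L̃⁻ - α` from the left and
`B = (1 - α) L̃⁺ - α` from the right, and for `α < 1` the condition `Ψ(L̃⁺, L̃⁻) < α` says exactly
that `A * B < 1`. Hence `V y = max (y - K) (A * (K - y))` is a Lyapunov function. A point
on the left of `K` may be sent to the right of `K` without decreasing `V`, but then the next step
decreases it, so `V` strictly decreases along two steps off `K`.
-/

open Set Filter

/-- `Ψ(u,v) = (uv−1)/((u+1)(v+1))`. -/
noncomputable def Psi (u v : ℝ) : ℝ := (u * v - 1) / ((u + 1) * (v + 1))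

section Lyapunov

variable {X : Type*} [TopologicalSpace X] {s : Set X}

theorem mapClusterPt_comp_of_continuousWithinAt {Y ι : Type*} [TopologicalSpace Y] {l : Filter ι}
    {u : ι → X} {g : X → Y} {y : X} (hg : ContinuousWithinAt g s y) (hu : ∀ᶠ i in l, u i ∈ s)
    (hy : MapClusterPt y l u) : MapClusterPt (g y) l (g ∘ u) :=
  hy.tendsto_comp' <| hg.tendsto.mono_left <| inf_le_inf_left _ <| le_principal_iff.2 hu

variable {R : Type*} [LinearOrder R] [TopologicalSpace R] [OrderClosedTopology R]

theorem le_of_mapClusterPt_of_antitone {v : ℕ → R} {r : R} (hv : Antitone v)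
    (hr : MapClusterPt r atTop v) (n : ℕ) : r ≤ v n :=
  isClosed_Iic.mem_of_mapClusterPt hr <| (eventually_ge_atTop n).mono fun _ hm => hv hm

theorem tendsto_iterate_of_lyapunov {F : X → X} {V : X → R} {p x₀ : X} (hs : IsCompact s)
    (hmaps : MapsTo F s s) (hF : ContinuousOn F s) (hV : ContinuousOn V s)
    (hle : ∀ y ∈ s, V (F y) ≤ V y) (hlt : ∀ y ∈ s, y ≠ p → ∃ k, V (F^[k] y) < V y)
    (hx₀ : x₀ ∈ s) : Tendsto (fun n => F^[n] x₀) atTop (nhds p) := by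
  have hmem : ∀ n, F^[n] x₀ ∈ s := fun n => hmaps.iterate n hx₀
  have hanti : Antitone (V ∘ fun n => F^[n] x₀) := antitone_nat_of_succ_le fun n => by
    simpa only [Function.comp_apply, Function.iterate_succ_apply'] using hle _ (hmem n)
  refine hs.tendsto_nhds_of_unique_mapClusterPt (Eventually.of_forall hmem) fun y hy hcluster => ?_
  have hcomp {g : X → R} (hg : ContinuousOn g s) :=
    mapClusterPt_comp_of_continuousWithinAt (hg y hy) (Eventually.of_forall hmem) hcluster
  have hVy : ∀ n, V y ≤ V (F^[n] x₀) := le_of_mapClusterPt_of_antitone hanti (hcomp hV)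
  by_contra hne
  obtain ⟨k, hk⟩ := hlt y hy hne
  have hVk : ContinuousOn (V ∘ F^[k]) s := hV.comp (hF.iterate hmaps k) (hmaps.iterate k)
  refine hk.not_ge (isClosed_Ici.mem_of_mapClusterPt (hcomp hVk) (Eventually.of_forall fun n => ?_))
  simpa only [Function.comp_apply, Function.iterate_add_apply, mem_Ici] using hVy (k + n)

end Lyapunov

/-- The Lyapunov function of the argument: the distance to `K`, where the points on the left of `K`
are given the weight `A`. -/
def weightedDist (A K y : ℝ) : ℝ := max (y - K) (A * (K - y))

section WeightedDist

variable {A B K y z : ℝ}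

theorem continuous_weightedDist : Continuous (weightedDist A K) := by
  unfold weightedDist
  fun_prop

theorem weightedDist_le_iff {r : ℝ} (hA : 0 < A) :
    weightedDist A K y ≤ r ↔ y ∈ Icc (K - r / A) (K + r) := by
  rw [weightedDist, max_le_iff, mem_Icc, sub_le_comm (b := r / A), le_div_iff₀' hA,
    sub_le_iff_le_add', and_comm]

theorem weightedDist_le_of_le (hA : 0 ≤ A) (hyz : y ≤ z) (hz : z - K ≤ A * (K - y)) :
    weightedDist A K z ≤ weightedDist A K y :=
  (max_le hz (mul_le_mul_of_nonneg_left (sub_le_sub_left hyz K) hA)).trans (le_max_right _ _)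

theorem weightedDist_lt_of_lt_of_le (hA : 0 < A) (hyz : y < z) (hz : z ≤ K) :
    weightedDist A K z < weightedDist A K y := by
  have hpos : 0 < A * (K - y) := mul_pos hA (sub_pos.2 (hyz.trans_le hz))
  exact (max_lt ((sub_nonpos.2 hz).trans_lt hpos)
    (mul_lt_mul_of_pos_left (sub_lt_sub_left hyz K) hA)).trans_le (le_max_right _ _)

theorem weightedDist_lt_of_gt (hA : 0 ≤ A) (hAB : A * B < 1) (hy : K < y) (hzy : z < y)
    (hz : K - z ≤ B * (y - K)) : weightedDist A K z < weightedDist A K y := by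
  have hreturn : A * (K - z) < y - K := calc
    A * (K - z) ≤ A * (B * (y - K)) := mul_le_mul_of_nonneg_left hz hA
    _ = A * B * (y - K) := (mul_assoc _ _ _).symm
    _ < y - K := mul_lt_of_lt_one_left (sub_pos.2 hy) hAB
  exact (max_lt (sub_lt_sub_right hzy K) hreturn).trans_le (le_max_left _ _)

end WeightedDist

/-- `F` moves the points of `s` strictly towards `K`, or beyond `K`, in which case it overshoots by
at most the factor `A` from the left of `K` and `B` from the right. -/
structure OvershootBound (F : ℝ → ℝ) (K A B : ℝ) (s : Set ℝ) : Prop where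
  lt_map : ∀ y ∈ s, y < K → y < F y
  map_lt : ∀ y ∈ s, K < y → F y < y
  map_sub_le : ∀ y ∈ s, y ≤ K → F y - K ≤ A * (K - y)
  sub_map_le : ∀ y ∈ s, K ≤ y → K - F y ≤ B * (y - K)

namespace OvershootBound

variable {F : ℝ → ℝ} {K A B y : ℝ} {s : Set ℝ}

theorem map_eq (h : OvershootBound F K A B s) (hK : K ∈ s) : F K = K := by
  have hle := h.map_sub_le K hK le_rfl
  have hge := h.sub_map_le K hK le_rfl
  rw [sub_self, mul_zero] at hle hge
  exact le_antisymm (sub_nonpos.1 hle) (sub_nonpos.1 hge)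

theorem weightedDist_map_lt_of_gt (h : OvershootBound F K A B s) (hA : 0 ≤ A) (hAB : A * B < 1)
    (hy : y ∈ s) (hKy : K < y) : weightedDist A K (F y) < weightedDist A K y :=
  weightedDist_lt_of_gt hA hAB hKy (h.map_lt y hy hKy) (h.sub_map_le y hy hKy.le)

theorem weightedDist_map_le (h : OvershootBound F K A B s) (hA : 0 ≤ A) (hAB : A * B < 1)
    (hy : y ∈ s) : weightedDist A K (F y) ≤ weightedDist A K y := by
  rcases lt_trichotomy y K with hyK | rfl | hKy
  · exact weightedDist_le_of_le hA (h.lt_map y hy hyK).le (h.map_sub_le y hy hyK.le)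
  · rw [h.map_eq hy]
  · exact (h.weightedDist_map_lt_of_gt hA hAB hy hKy).le

theorem weightedDist_map_map_lt (h : OvershootBound F K A B s) (hA : 0 < A) (hAB : A * B < 1)
    (hy : y ∈ s) (hFy : F y ∈ s) (hne : y ≠ K) :
    weightedDist A K (F (F y)) < weightedDist A K y := by
  have hle := h.weightedDist_map_le hA.le hAB hy
  have hle' := h.weightedDist_map_le hA.le hAB hFy
  rcases hne.lt_or_gt with hyK | hKy
  · rcases le_or_gt (F y) K with hFyK | hKFy
    · exact hle'.trans_lt (weightedDist_lt_of_lt_of_le hA (h.lt_map y hy hyK) hFyK)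
    · exact (h.weightedDist_map_lt_of_gt hA.le hAB hFy hKFy).trans_le hle
  · exact hle'.trans_lt (h.weightedDist_map_lt_of_gt hA.le hAB hy hKy)

theorem tendsto_iterate {r x₀ : ℝ} (h : OvershootBound F K A B (Icc (K - r / A) (K + r)))
    (hA : 0 < A) (hAB : A * B < 1) (hF : ContinuousOn F (Icc (K - r / A) (K + r)))
    (hx₀ : x₀ ∈ Icc (K - r / A) (K + r)) : Tendsto (fun n => F^[n] x₀) atTop (nhds K) := by
  have hle : ∀ y ∈ Icc (K - r / A) (K + r), weightedDist A K (F y) ≤ weightedDist A K y :=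
    fun _ hy => h.weightedDist_map_le hA.le hAB hy
  have hmaps : MapsTo F (Icc (K - r / A) (K + r)) (Icc (K - r / A) (K + r)) := fun y hy =>
    (weightedDist_le_iff hA).1 ((hle y hy).trans ((weightedDist_le_iff hA).2 hy))
  exact tendsto_iterate_of_lyapunov isCompact_Icc hmaps hF continuous_weightedDist.continuousOn hle
    (fun _ hy hne => ⟨2, h.weightedDist_map_map_lt hA hAB hy (hmaps hy) hne⟩) hx₀

end OvershootBound

/-- The map `f` under prediction-based control of intensity `α`. -/
def controlledMap (α : ℝ) (f : ℝ → ℝ) (y : ℝ) : ℝ := (1 - α) * f y + α * y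

/-- The constant written `𝓛(α)` in the paper, which bounds the overshoot of the controlled map when
`L` bounds that of the uncontrolled one. -/
def controlledLip (α L : ℝ) : ℝ := (1 - α) * L - α

section Control

variable {α L : ℝ}

theorem lt_one_of_controlledLip_pos (hL : -1 < L) (h : 0 < controlledLip α L) : α < 1 := by
  have hprod : 0 < (1 - α) * (L + 1) := by
    unfold controlledLip at h
    linarith
  exact sub_pos.1 (pos_of_mul_pos_left hprod (by linarith))

theorem one_le_controlledLip_iff (hL : -1 < L) :
    1 ≤ controlledLip α L ↔ α ≤ (L - 1) / (L + 1) := by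
  rw [le_div_iff₀ (by linarith), controlledLip]
  constructor <;> intro h <;> linarith

theorem controlledLip_mul_controlledLip_lt_one_iff {u v : ℝ} (hu : -1 < u) (hv : -1 < v)
    (hα : α < 1) : controlledLip α u * controlledLip α v < 1 ↔ Psi u v < α := by
  have hfactor : 1 - controlledLip α u * controlledLip α v =
      (1 - α) * (α * ((u + 1) * (v + 1)) - (u * v - 1)) := by
    unfold controlledLip
    ring
  have hden : 0 < (u + 1) * (v + 1) := mul_pos (by linarith) (by linarith)
  rw [← sub_pos, hfactor, mul_pos_iff_of_pos_left (sub_pos.2 hα), sub_pos, Psi, div_lt_iff₀ hden]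

theorem overshootBound_controlledMap {f : ℝ → ℝ} {K A B : ℝ} {s : Set ℝ}
    (h : OvershootBound f K A B s) (hα : α < 1) :
    OvershootBound (controlledMap α f) K (controlledLip α A) (controlledLip α B) s := by
  have hα' : 0 < 1 - α := sub_pos.2 hα
  unfold controlledMap controlledLip
  refine ⟨fun y hy hyK => ?_, fun y hy hKy => ?_, fun y hy hyK => ?_, fun y hy hKy => ?_⟩
  · linarith [mul_lt_mul_of_pos_left (h.lt_map y hy hyK) hα']
  · linarith [mul_lt_mul_of_pos_left (h.map_lt y hy hKy) hα']
  · linarith [mul_le_mul_of_nonneg_left (h.map_sub_le y hy hyK) hα'.le]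
  · linarith [mul_le_mul_of_nonneg_left (h.sub_map_le y hy hKy) hα'.le]

end Control

theorem eq_iterate_of_succ {X : Type*} {F : X → X} {x : ℕ → X} (hx : ∀ n, x (n + 1) = F (x n)) :
    x = fun n => F^[n] (x 0) := by
  funext n
  induction n with
  | zero => rfl
  | succ n ih => rw [hx, ih, Function.iterate_succ_apply']

theorem stmt11_general {f : ℝ → ℝ} {K θ Lm Lp α : ℝ} {x : ℕ → ℝ} (hLm : -1 < Lm) (hLp : -1 < Lp)
    (hα : Psi Lp Lm < α) (hpos : 0 < controlledLip α Lm)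
    (hf : OvershootBound f K Lm Lp (Icc (K - θ / controlledLip α Lm) (K + θ)))
    (hf_cont : ContinuousOn f (Icc (K - θ / controlledLip α Lm) (K + θ)))
    (hx0 : x 0 ∈ Icc (K - θ / controlledLip α Lm) (K + θ))
    (hrec : ∀ n, x (n + 1) = (1 - α) * f (x n) + α * x n) :
    Tendsto x atTop (nhds K) := by
  have hα1 : α < 1 := lt_one_of_controlledLip_pos hLm hpos
  have hprod : controlledLip α Lm * controlledLip α Lp < 1 := by
    rwa [mul_comm, controlledLip_mul_controlledLip_lt_one_iff hLp hLm hα1]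
  have hcont : ContinuousOn (controlledMap α f) (Icc (K - θ / controlledLip α Lm) (K + θ)) :=
    (continuousOn_const.mul hf_cont).add (continuousOn_const.mul continuousOn_id)
  rw [eq_iterate_of_succ (F := controlledMap α f) hrec]
  exact (overshootBound_controlledMap hf hα1).tendsto_iterate hpos hprod hcont hx0

/-- deterministic local stability of PBC under one-sided Lipschitz
conditions near K: for α ∈ (Ψ(L̃⁺,L̃⁻), (L̃⁻−1)/(L̃⁻+1)], any solution starting in
(K − θ/𝓛̃⁻(α), K + θ) converges to K. -/
theorem stmt11
    (f : ℝ → ℝ) (K : ℝ)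
    (hf_cont : ContinuousOn f (Set.Ici 0))
    (hf_nonneg : ∀ x, 0 ≤ x → 0 ≤ f x)
    (hf0 : f 0 = 0)
    (hK : 0 < K)
    (hbelow : ∀ x ∈ Set.Ioo 0 K, x < f x)
    (habove : ∀ x ∈ Set.Ioi K, 0 < f x ∧ f x < x)
    (θ : ℝ) (hθ : θ ∈ Set.Ioo 0 K)
    (Lm Lp : ℝ) (hLp : 1 < Lp) (hLmLp : Lp ≤ Lm)
    (hLipL : ∀ x ∈ Set.Icc (K - θ) K, f x - K ≤ Lm * (K - x))
    (hLipR : ∀ x ∈ Set.Icc K (K + θ), K - f x ≤ Lp * (x - K))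
    (α : ℝ) (hα₁ : Psi Lp Lm < α) (hα₂ : α ≤ (Lm - 1) / (Lm + 1))
    (x : ℕ → ℝ)
    (hx0 : x 0 ∈ Set.Ioo (K - θ / ((1 - α) * Lm - α)) (K + θ))
    (hrec : ∀ n, x (n + 1) = (1 - α) * f (x n) + α * x n) :
    Tendsto x atTop (nhds K) := by
  have hLm : -1 < Lm := by linarith
  have hone : 1 ≤ controlledLip α Lm := (one_le_controlledLip_iff hLm).2 hα₂
  have hlow : K - θ ≤ K - θ / controlledLip α Lm := sub_le_sub_left (div_le_self hθ.1.le hone) K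
  have hmono : Icc (K - θ / controlledLip α Lm) (K + θ) ⊆ Icc (K - θ) (K + θ) :=
    Icc_subset_Icc_left hlow
  have hpos : ∀ y ∈ Icc (K - θ / controlledLip α Lm) (K + θ), 0 < y := fun y hy =>
    (sub_pos.2 hθ.2).trans_le (hmono hy).1
  exact stmt11_general hLm (by linarith) hα₁ (by linarith)
    ⟨fun y hy hyK => hbelow y ⟨hpos y hy, hyK⟩, fun y _ hKy => (habove y hKy).2,
      fun y hy hyK => hLipL y ⟨(hmono hy).1, hyK⟩, fun y hy hKy => hLipR y ⟨hKy, (hmono hy).2⟩⟩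
    (hf_cont.mono fun y hy => (hpos y hy).le) (Ioo_subset_Icc_self hx0) hrec
end

section
/- Suppose f is continuously differentiable on (0,∞) with f′(K) < −1 and f′(x) < 1 for all x ∈ [x_max, f_m]. Set α₀ := (−f′(K)−1)/(−f′(K)+1) and assume that for every x ∈ [x_max, K), ((1−α₀)f′(G(α₀,x)) + α₀)·((1−α₀)f′(x) + α₀) < 1 (equivalently, α₀ > Ψ(f′(G(α₀,x)), f′(x))). Then for every α ∈ (α₀, 1) and every x₀ > 0, the sequence defined by x_{n+1} = (1−α)f(x_n) + α x_n converges to K. -/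
open Set Filter

/-!
The set of cluster points of a bounded orbit of `g` is compact and contained in its own image.
If its least element `l` were below the fixed point `K`, then `l = g p` with `p > K`, and by the
intermediate value theorem `p = g z` with `z < K` lying above a cluster point, so that
`l = g (g z) > z ≥ l`. Hence `K` attracts every orbit once `y < g (g y)` for all `y < K`.

For the controlled map `g = G f α`, the derivative condition says that `G f α₀ ∘ G f α₀ - id` is
decreasing on `[xmax, K]`, and it vanishes at `K`. The inequality `y < g (g y)` passes from `α₀` to
`α ≥ α₀` because it amounts to `0 < (f y - y) + (f (g y) - g y)`, and `f - id` is decreasing beyond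
`xmax`. A point `y < xmax` with `g y > K` reduces to this case, as `g y ≤ g xmax` is attained by `g`
on `[xmax, K)`.
-/

section Orbits

lemma exists_mapClusterPt_apply_eq_of_comp {ι X Y : Type*} [TopologicalSpace X]
    [TopologicalSpace Y] [T2Space Y] {S : Set X} {g : X → Y} {u : ι → X} {F : Filter ι} {c : Y}
    (hS : IsCompact S) (hg : ContinuousOn g S) (hu : ∀ᶠ i in F, u i ∈ S)
    (hc : MapClusterPt c F (g ∘ u)) : ∃ p, MapClusterPt p F u ∧ g p = c := by
  obtain ⟨U, hUF, hUc⟩ := mapClusterPt_iff_ultrafilter.1 hc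
  have huU : ∀ᶠ i in U, u i ∈ S := hUF hu
  obtain ⟨p, hpS, hUp⟩ := hS.ultrafilter_le_nhds' (U.map u) huU
  have hgp : Tendsto (g ∘ u) U (nhds (g p)) :=
    (hg p hpS).tendsto.comp (tendsto_nhdsWithin_iff.2 ⟨hUp, huU⟩)
  exact ⟨p, mapClusterPt_iff_ultrafilter.2 ⟨U, hUF, hUp⟩, tendsto_nhds_unique hgp hUc⟩

lemma apply_eq_of_eventually_le_nhdsLT_nhdsGT {α : Type*} [TopologicalSpace α] [LinearOrder α]
    [OrderClosedTopology α] {g : α → α} {K : α} [(nhdsWithin K (Iio K)).NeBot]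
    [(nhdsWithin K (Ioi K)).NeBot] (hg : ContinuousAt g K)
    (hle : ∀ᶠ y in nhdsWithin K (Iio K), y ≤ g y) (hge : ∀ᶠ y in nhdsWithin K (Ioi K), g y ≤ y) :
    g K = K := by
  have hid (t : Set α) : Tendsto id (nhdsWithin K t) (nhds K) := nhdsWithin_le_nhds
  have hgt (t : Set α) : Tendsto g (nhdsWithin K t) (nhds (g K)) := hg.mono_left nhdsWithin_le_nhds
  exact le_antisymm (le_of_tendsto_of_tendsto (hgt _) (hid _) hge)
    (le_of_tendsto_of_tendsto (hid _) (hgt _) hle)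

/-- The graph of `g` over `s` crosses the diagonal from above to below, exactly at `K`. This is
the shape of a population map with the unique positive equilibrium `K`. -/
structure CrossesDiagonal {α : Type*} [LinearOrder α] (g : α → α) (s : Set α) (K : α) : Prop where
  apply_self : g K = K
  lt_apply : ∀ y ∈ s, y < K → y < g y
  apply_lt : ∀ y ∈ s, K < y → g y < y

namespace CrossesDiagonal

section LinearOrder

variable {α : Type*} [LinearOrder α] {g : α → α} {s : Set α} {K y : α}

lemma lt_of_apply_le (h : CrossesDiagonal g s K) (hy : y ∈ s) (hle : g y ≤ y) (hne : g y ≠ K) :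
    K < y := by
  rcases lt_trichotomy y K with hyK | rfl | hyK
  · exact absurd hle (h.lt_apply y hy hyK).not_ge
  · exact absurd h.apply_self hne
  · exact hyK

lemma lt_of_le_apply (h : CrossesDiagonal g s K) (hy : y ∈ s) (hle : y ≤ g y) (hne : g y ≠ K) :
    y < K := by
  rcases lt_trichotomy y K with hyK | rfl | hyK
  · exact hyK
  · exact absurd h.apply_self hne
  · exact absurd hle (h.apply_lt y hy hyK).not_ge

end LinearOrder

variable {α : Type*} [ConditionallyCompleteLinearOrder α] [TopologicalSpace α] [OrderTopology α]
  {g : α → α} {s : Set α} {K : α} [OrdConnected s]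

lemma exists_mapsTo_Icc (h : CrossesDiagonal g s K) (hKs : K ∈ s) (hg : ContinuousOn g s)
    (hmaps : MapsTo g s s) {B x₀ : α} (hBs : B ∈ s) (hB : ∀ y ∈ s, y < K → g y ≤ B)
    (hx₀ : x₀ ∈ s) :
    ∃ a ∈ s, ∃ M ∈ s, x₀ ∈ Icc a M ∧ MapsTo g (Icc a M) (Icc a M) := by
  obtain ⟨M, hMs, hx₀M, hBM, hKM⟩ : ∃ M ∈ s, x₀ ≤ M ∧ B ≤ M ∧ K ≤ M :=
    ⟨max x₀ (max B K), max_rec' (· ∈ s) hx₀ (max_rec' (· ∈ s) hBs hKs), by simp⟩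
  obtain ⟨w, hw, hwmin⟩ := isCompact_Icc.exists_isMinOn ⟨K, left_mem_Icc.2 hKM⟩
    (hg.mono (OrdConnected.out ‹_› hKs hMs))
  have hws : g w ∈ s := hmaps (OrdConnected.out ‹_› hKs hMs hw)
  obtain ⟨a, has, hax₀, haw⟩ : ∃ a ∈ s, a ≤ x₀ ∧ a ≤ g w :=
    ⟨min x₀ (g w), min_rec' (· ∈ s) hx₀ hws, by simp⟩
  refine ⟨a, has, M, hMs, ⟨hax₀, hx₀M⟩, fun y hy => ?_⟩
  have hys : y ∈ s := OrdConnected.out ‹_› has hMs hy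
  rcases lt_or_ge y K with hyK | hyK
  · exact ⟨hy.1.trans (h.lt_apply y hys hyK).le, (hB y hys hyK).trans hBM⟩
  · refine ⟨haw.trans (hwmin ⟨hyK, hy.2⟩), ?_⟩
    rcases hyK.eq_or_lt with rfl | hKy
    · exact h.apply_self.trans_le hKM
    · exact (h.apply_lt y hys hKy).le.trans hy.2

variable [DenselyOrdered α]

lemma eq_of_mem_of_subset_image (h : CrossesDiagonal g s K) (hKs : K ∈ s)
    (hg : ContinuousOn g s) (hlt2 : ∀ y ∈ s, y < K → y < g (g y)) {Ω : Set α}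
    (hΩ : IsCompact Ω) (hΩs : Ω ⊆ s) (hΩg : Ω ⊆ g '' Ω) {c : α} (hc : c ∈ Ω) : c = K := by
  obtain ⟨l, hl, hlmin⟩ := hΩ.exists_isLeast ⟨c, hc⟩
  obtain ⟨u, hu, humax⟩ := hΩ.exists_isGreatest ⟨c, hc⟩
  obtain ⟨p, hp, rfl⟩ := hΩg hl
  obtain ⟨q, hq, rfl⟩ := hΩg hu
  have hqK (hKu : K < g q) : q < K := h.lt_of_le_apply (hΩs hq) (humax hq) hKu.ne'
  have hKl : K ≤ g p := by
    by_contra! hlK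
    have hKp : K < p := h.lt_of_apply_le (hΩs hp) (hlmin hp) hlK.ne
    have hqK : q < K := hqK (hKp.trans_le (humax hp))
    obtain ⟨z, ⟨hqz, hzK⟩, rfl⟩ : p ∈ g '' Icc q K :=
      intermediate_value_Icc' hqK.le (hg.mono (OrdConnected.out ‹_› (hΩs hq) hKs))
        ⟨h.apply_self.trans_le hKp.le, humax hp⟩
    have hzK : z < K := hzK.lt_of_ne fun hz => hKp.ne' (hz ▸ h.apply_self)
    have hzs : z ∈ s := OrdConnected.out ‹_› (hΩs hq) hKs ⟨hqz, hzK.le⟩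
    exact (hlt2 z hzs hzK).not_ge ((hlmin hq).trans hqz)
  have huK : g q ≤ K := by
    by_contra! hKu
    exact (hqK hKu).not_ge (hKl.trans (hlmin hq))
  exact le_antisymm ((humax hc).trans huK) (hKl.trans (hlmin hc))

theorem tendsto_orbit (h : CrossesDiagonal g s K) (hKs : K ∈ s) (hg : ContinuousOn g s)
    (hmaps : MapsTo g s s) {B : α} (hBs : B ∈ s) (hB : ∀ y ∈ s, y < K → g y ≤ B)
    (hlt2 : ∀ y ∈ s, y < K → y < g (g y)) {x : ℕ → α} (hx0 : x 0 ∈ s)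
    (hrec : ∀ n, x (n + 1) = g (x n)) : Tendsto x atTop (nhds K) := by
  obtain ⟨a, has, M, hMs, hx0I, hI⟩ := h.exists_mapsTo_Icc hKs hg hmaps hBs hB hx0
  have hIs : Icc a M ⊆ s := OrdConnected.out ‹_› has hMs
  have hxI : ∀ n, x n ∈ Icc a M := fun n => Nat.rec hx0I (fun k ih => hrec k ▸ hI ih) n
  have hxI' : ∀ᶠ n in atTop, x n ∈ Icc a M := .of_forall hxI
  have hΩI : {c | MapClusterPt c atTop x} ⊆ Icc a M := fun c hc =>
    isClosed_Icc.mem_of_mapClusterPt hc hxI'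
  have hΩ : IsCompact {c | MapClusterPt c atTop x} :=
    isCompact_Icc.of_isClosed_subset isClosed_setOfPred_clusterPt hΩI
  have hΩg : {c | MapClusterPt c atTop x} ⊆ g '' {c | MapClusterPt c atTop x} := by
    intro c (hc : ClusterPt c (map x atTop))
    rw [← map_add_atTop_eq_nat 1, map_map, show x ∘ (· + 1) = g ∘ x from funext hrec] at hc
    exact exists_mapClusterPt_apply_eq_of_comp isCompact_Icc (hg.mono hIs) hxI' hc
  exact isCompact_Icc.tendsto_nhds_of_unique_mapClusterPt hxI' fun c _ hc =>
    h.eq_of_mem_of_subset_image hKs hg hlt2 hΩ (hΩI.trans hIs) hΩg hc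

lemma lt_apply_apply_of_forall_le (h : CrossesDiagonal g s K) (hKs : K ∈ s) {m : α}
    (hmK : m ≤ K) (hg : ContinuousOn g (Icc m K)) (hmax : ∀ y ∈ s, y < m → g y ≤ g m)
    (hlt2 : ∀ y ∈ Ico m K, y < g (g y)) : ∀ y ∈ s, y < K → y < g (g y) := by
  intro y hys hyK
  rcases le_or_gt m y with hmy | hym
  · exact hlt2 y ⟨hmy, hyK⟩
  have hyg := h.lt_apply y hys hyK
  rcases lt_trichotomy (g y) K with hgK | hgK | hgK
  · exact hyg.trans (h.lt_apply _ (OrdConnected.out ‹_› hys hKs ⟨hyg.le, hgK.le⟩) hgK)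
  · rwa [hgK, h.apply_self]
  · obtain ⟨z, ⟨hmz, hzK⟩, hzy⟩ : g y ∈ g '' Icc m K :=
      intermediate_value_Icc' hmK hg ⟨h.apply_self.trans_le hgK.le, hmax y hys hym⟩
    have hzK : z < K := hzK.lt_of_ne fun hz => hgK.ne' (hzy ▸ hz ▸ h.apply_self)
    exact (hym.trans_le hmz).trans (hzy ▸ hlt2 z ⟨hmz, hzK⟩)

end CrossesDiagonal

end Orbits

section Slopes

variable {f f' : ℝ → ℝ}

lemma strictAntiOn_sub_id_of_hasDerivAt_lt_one {D : Set ℝ} (hD : Convex ℝ D)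
    (hf : ContinuousOn f D) (hd : ∀ x ∈ interior D, HasDerivAt f (f' x) x)
    (hlt : ∀ x ∈ interior D, f' x < 1) : StrictAntiOn (fun x => f x - x) D :=
  strictAntiOn_of_hasDerivWithinAt_neg hD (hf.sub continuousOn_id)
    (fun x hx => ((hd x hx).sub (hasDerivAt_id x)).hasDerivWithinAt)
    (fun x hx => sub_neg.2 (hlt x hx))

lemma lt_apply_apply_of_hasDerivAt_mul_lt_one {a b : ℝ}
    (hd : ∀ x ∈ Icc a b, HasDerivAt f (f' x) x)
    (hd2 : ∀ x ∈ Icc a b, HasDerivAt f (f' (f x)) (f x)) (hb : f b = b)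
    (hlt : ∀ x ∈ Ioo a b, f' (f x) * f' x < 1) : ∀ x ∈ Ico a b, x < f (f x) := by
  intro x hx
  have hcomp : ∀ y ∈ Icc a b, HasDerivAt (f ∘ f) (f' (f y) * f' y) y := fun y hy =>
    (hd2 y hy).comp y (hd y hy)
  have hanti : StrictAntiOn (fun y => (f ∘ f) y - y) (Icc a b) :=
    strictAntiOn_sub_id_of_hasDerivAt_lt_one (convex_Icc a b)
      (fun y hy => (hcomp y hy).continuousAt.continuousWithinAt)
      (fun y hy => hcomp y (interior_subset hy)) (by rwa [interior_Icc])
  have hpos := hanti ⟨hx.1, hx.2.le⟩ ⟨hx.1.trans hx.2.le, le_rfl⟩ hx.2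
  simpa only [Function.comp_apply, hb, sub_self, sub_pos] using hpos

end Slopes

section Control

variable {f : ℝ → ℝ} {s : Set ℝ} {β γ K y : ℝ}

lemma G_eq_add (f : ℝ → ℝ) (β y : ℝ) : G f β y = y + (1 - β) * (f y - y) := by
  rw [G]; ring

lemma hasDerivAt_G {d : ℝ} (hf : HasDerivAt f d y) :
    HasDerivAt (G f β) ((1 - β) * d + β) y := by
  have h := (hf.const_mul (1 - β)).add ((hasDerivAt_id y).const_mul β)
  rwa [mul_one] at h

lemma mapsTo_G (hs : Convex ℝ s) (hf : MapsTo f s s) (hβ : β ∈ Icc 0 1) : MapsTo (G f β) s s :=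
  fun _ hy => hs (hf hy) hy (sub_nonneg.2 hβ.2) hβ.1 (sub_add_cancel 1 β)

lemma crossesDiagonal_G (h : CrossesDiagonal f s K) (hβ : β < 1) :
    CrossesDiagonal (G f β) s K where
  apply_self := by rw [G_eq_add, h.apply_self, sub_self, mul_zero, add_zero]
  lt_apply y hy hyK := by
    rw [G_eq_add, lt_add_iff_pos_right]
    exact mul_pos (sub_pos.2 hβ) (sub_pos.2 (h.lt_apply y hy hyK))
  apply_lt y hy hKy := by
    rw [G_eq_add, add_lt_iff_neg_left]
    exact mul_neg_of_pos_of_neg (sub_pos.2 hβ) (sub_neg.2 (h.apply_lt y hy hKy))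

lemma G_le_G {z : ℝ} (hβ : β ∈ Icc 0 1) (hyz : y ≤ z) (hf : f y ≤ f z) : G f β y ≤ G f β z :=
  add_le_add (mul_le_mul_of_nonneg_left hf (sub_nonneg.2 hβ.2))
    (mul_le_mul_of_nonneg_left hyz hβ.1)

lemma antitone_G_apply (hy : y ≤ f y) : Antitone fun β => G f β y := by
  intro β γ hβγ
  simp only [G_eq_add]
  gcongr

lemma G_apply_le (hβ : 0 ≤ β) (hy : y ≤ f y) : G f β y ≤ f y := by
  simpa only [G, sub_zero, one_mul, zero_mul, add_zero] using antitone_G_apply hy hβ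

lemma le_G_apply (hβ : β ≤ 1) (hy : y ≤ f y) : y ≤ G f β y := by
  simpa only [G, sub_self, zero_mul, one_mul, zero_add] using antitone_G_apply hy hβ

lemma lt_G_G_iff (hβ : β < 1) :
    y < G f β (G f β y) ↔ 0 < (f y - y) + (f (G f β y) - G f β y) := by
  have hsub : G f β (G f β y) - y = (1 - β) * ((f y - y) + (f (G f β y) - G f β y)) := by
    rw [G_eq_add f β (G f β y)]
    linear_combination G_eq_add f β y
  rw [← sub_pos, hsub, mul_pos_iff_of_pos_left (sub_pos.2 hβ)]

lemma lt_G_G_of_le (hβγ : β ≤ γ) (hγ : γ < 1) (hy : y ≤ f y)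
    (hanti : AntitoneOn (fun z => f z - z) (Icc (G f γ y) (G f β y)))
    (hlt2 : y < G f β (G f β y)) : y < G f γ (G f γ y) := by
  have hG : G f γ y ≤ G f β y := antitone_G_apply hy hβγ
  rw [lt_G_G_iff (hβγ.trans_lt hγ)] at hlt2
  rw [lt_G_G_iff hγ]
  exact hlt2.trans_le (add_le_add_right (hanti (left_mem_Icc.2 hG) (right_mem_Icc.2 hG) hG) _)

theorem tendsto_orbit_G (hs : Convex ℝ s) (hKs : K ∈ s) (hf : CrossesDiagonal f s K)
    (hcont : ContinuousOn f s) (hmaps : MapsTo f s s) {m : ℝ} (hms : m ∈ s) (hmK : m ≤ K)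
    (hmax : ∀ y ∈ s, y < K → f y ≤ f m)
    (hanti : AntitoneOn (fun y => f y - y) (Icc m (f m))) (hβ : 0 ≤ β) (hβγ : β ≤ γ) (hγ : γ < 1)
    (hlt2 : ∀ y ∈ Ico m K, y < G f β (G f β y)) {x : ℕ → ℝ} (hx0 : x 0 ∈ s)
    (hrec : ∀ n, x (n + 1) = G f γ (x n)) : Tendsto x atTop (nhds K) := by
  have : OrdConnected s := hs.ordConnected
  have hmKs : Icc m K ⊆ s := OrdConnected.out this hms hKs
  have hγI : γ ∈ Icc 0 1 := ⟨hβ.trans hβγ, hγ.le⟩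
  have hG : CrossesDiagonal (G f γ) s K := crossesDiagonal_G hf hγ
  have hGcont : ContinuousOn (G f γ) s :=
    (continuousOn_const.mul hcont).add (continuousOn_const.mul continuousOn_id)
  have hGle : ∀ y ∈ s, y < K → G f γ y ≤ f m := fun y hy hyK =>
    (G_apply_le hγI.1 (hf.lt_apply y hy hyK).le).trans (hmax y hy hyK)
  have hGlt2 : ∀ y ∈ Ico m K, y < G f γ (G f γ y) := fun y hy => by
    have hys : y ∈ s := hmKs (Ico_subset_Icc_self hy)
    have hyf : y ≤ f y := (hf.lt_apply y hys hy.2).le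
    refine lt_G_G_of_le hβγ hγ hyf (hanti.mono ?_) (hlt2 y hy)
    exact Icc_subset_Icc (hy.1.trans (le_G_apply hγ.le hyf))
      ((G_apply_le hβ hyf).trans (hmax y hys hy.2))
  refine hG.tendsto_orbit hKs hGcont (mapsTo_G hs hmaps hγI) (hmaps hms) hGle ?_ hx0 hrec
  exact hG.lt_apply_apply_of_forall_le hKs hmK (hGcont.mono hmKs)
    (fun y hy hym => G_le_G hγI hym.le (hmax y hy (hym.trans_le hmK))) hGlt2

end Control

lemma crossesDiagonal_Ioi {f : ℝ → ℝ} {a K : ℝ} (haK : a < K) (hf : ContinuousAt f K)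
    (hbelow : ∀ y ∈ Ioo a K, y < f y) (habove : ∀ y ∈ Ioi K, f y < y) :
    CrossesDiagonal f (Ioi a) K where
  apply_self := apply_eq_of_eventually_le_nhdsLT_nhdsGT hf
    (by filter_upwards [Ioo_mem_nhdsLT haK] with y hy using (hbelow y hy).le)
    (by filter_upwards [self_mem_nhdsWithin] with y hy using (habove y hy).le)
  lt_apply y hy hyK := hbelow y ⟨hy, hyK⟩
  apply_lt y _ hKy := habove y hKy

lemma CrossesDiagonal.mapsTo_Ioi {f : ℝ → ℝ} {a K : ℝ} (h : CrossesDiagonal f (Ioi a) K)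
    (hpos : ∀ y ∈ Ioi K, a < f y) : MapsTo f (Ioi a) (Ioi a) := by
  intro y hy
  rcases lt_trichotomy y K with hyK | rfl | hKy
  · exact hy.trans (h.lt_apply y hy hyK)
  · rwa [h.apply_self]
  · exact hpos y hKy

theorem stmt19_general {f f' : ℝ → ℝ} {K xmax α₀ α : ℝ}
    (hbelow : ∀ y ∈ Ioo 0 K, y < f y) (habove : ∀ y ∈ Ioi K, 0 < f y ∧ f y < y)
    (hxmax : xmax ∈ Ioc 0 K) (hmax : IsMaxOn f (Ioo 0 K) xmax)
    (hd : ∀ y ∈ Ioi 0, HasDerivAt f (f' y) y) (hf'lt : ∀ y ∈ Ioo xmax (f xmax), f' y < 1)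
    (hα₀ : 0 ≤ α₀) (henv : ∀ y ∈ Ioo xmax K,
      ((1 - α₀) * f' (G f α₀ y) + α₀) * ((1 - α₀) * f' y + α₀) < 1)
    (hα₀α : α₀ ≤ α) (hα : α < 1) {x : ℕ → ℝ} (hx0 : 0 < x 0)
    (hrec : ∀ n, x (n + 1) = G f α (x n)) : Tendsto x atTop (nhds K) := by
  have hK : 0 < K := hxmax.1.trans_le hxmax.2
  have hα₀1 : α₀ < 1 := hα₀α.trans_lt hα
  have hcont : ContinuousOn f (Ioi 0) := fun y hy => (hd y hy).continuousAt.continuousWithinAt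
  have hf : CrossesDiagonal f (Ioi 0) K :=
    crossesDiagonal_Ioi hK (hd K hK).continuousAt hbelow fun y hy => (habove y hy).2
  have hmaps : MapsTo f (Ioi 0) (Ioi 0) := hf.mapsTo_Ioi fun y hy => (habove y hy).1
  have hGmaps : MapsTo (G f α₀) (Ioi 0) (Ioi 0) :=
    mapsTo_G (convex_Ioi 0) hmaps ⟨hα₀, hα₀1.le⟩
  have hpos : Ici xmax ⊆ Ioi 0 := Ici_subset_Ioi.2 hxmax.1
  have hanti : StrictAntiOn (fun y => f y - y) (Icc xmax (f xmax)) :=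
    strictAntiOn_sub_id_of_hasDerivAt_lt_one (convex_Icc _ _)
      (hcont.mono (Icc_subset_Ici_self.trans hpos))
      (fun y hy => hd y (hpos (interior_subset hy).1)) (by rwa [interior_Icc])
  have hlt2 : ∀ y ∈ Ico xmax K, y < G f α₀ (G f α₀ y) :=
    lt_apply_apply_of_hasDerivAt_mul_lt_one (fun y hy => hasDerivAt_G (hd y (hpos hy.1)))
      (fun y hy => hasDerivAt_G (hd _ (hGmaps (hpos hy.1))))
      (crossesDiagonal_G hf hα₀1).apply_self henv
  exact tendsto_orbit_G (convex_Ioi 0) hK hf hcont hmaps hxmax.1 hxmax.2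
    (fun y hy hyK => hmax ⟨hy, hyK⟩) hanti.antitoneOn hα₀ hα₀α hα hlt2 hx0 hrec

/-- for a continuously differentiable map satisfying the envelope condition
α₀ > Ψ(f′(G(α₀,x)), f′(x)) on [x_max, K), every constant control α ∈ (α₀,1) globally
stabilizes K. -/
theorem stmt19
    (f : ℝ → ℝ) (K : ℝ)
    (hf_cont : ContinuousOn f (Set.Ici 0))
    (hf_nonneg : ∀ x, 0 ≤ x → 0 ≤ f x)
    (hf0 : f 0 = 0)
    (hK : 0 < K)
    (hbelow : ∀ x ∈ Set.Ioo 0 K, x < f x)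
    (habove : ∀ x ∈ Set.Ioi K, 0 < f x ∧ f x < x)
    (fm f2m : ℝ)
    (hfm : IsGreatest (f '' Set.Icc 0 K) fm)
    (hfmK : K < fm)
    (hf2m : IsGLB (f '' Set.Ioo K fm) f2m)
    (xmax : ℝ) (hxmax_mem : xmax ∈ Set.Icc 0 K) (hxmax_val : f xmax = fm)
    (hxmax_largest : ∀ y ∈ Set.Icc 0 K, f y = fm → y ≤ xmax)
    (f' : ℝ → ℝ)
    (hd1 : ∀ x ∈ Set.Ioi (0:ℝ), HasDerivAt f (f' x) x)
    (hd1cont : ContinuousOn f' (Set.Ioi 0))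
    (hfK : f' K < -1)
    (hf'lt : ∀ x ∈ Set.Icc xmax fm, f' x < 1)
    (α₀ : ℝ) (hα₀ : α₀ = (-f' K - 1) / (-f' K + 1))
    (henv : ∀ x ∈ Set.Ico xmax K,
      ((1 - α₀) * f' (G f α₀ x) + α₀) * ((1 - α₀) * f' x + α₀) < 1)
    (α : ℝ) (hα : α ∈ Set.Ioo α₀ 1)
    (x : ℕ → ℝ) (hx0 : 0 < x 0)
    (hrec : ∀ n, x (n + 1) = (1 - α) * f (x n) + α * x n) :
    Tendsto x atTop (nhds K) := by
  subst hxmax_val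
  have hxmax_pos : 0 < xmax := hxmax_mem.1.lt_of_ne fun h => by
    rw [← h, hf0] at hfmK
    exact hfmK.not_gt hK
  have hα₀_nonneg : 0 ≤ α₀ := hα₀ ▸ div_nonneg (by linarith) (by linarith)
  exact stmt19_general hbelow habove ⟨hxmax_pos, hxmax_mem.2⟩
    (fun y hy => hfm.2 (mem_image_of_mem f (Ioo_subset_Icc_self hy))) hd1
    (fun y hy => hf'lt y (Ioo_subset_Icc_self hy)) hα₀_nonneg
    (fun y hy => henv y (Ioo_subset_Ico_self hy)) hα.1.le hα.2 hx0 hrec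
end
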